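/- Let D, R_A, R_B be nonzero real numbers with D ≠ R_A, D ≠ −R_B, D·(D − R_A + R_B) ≠ 0, and suppose that J = (R_A − D)(R_B + D)/(D·(D − R_A + R_B)) satisfies −1 < J < 0. Let s ∈ {1, −1} be such that s·R_A·(R_A − D) > 0, and let β be a nonzero real number with coth²β = −1/J and β·D > 0. Define ε_A = s·(D/(R_A − D))·(1/coth β) and ε_B = −s·(D/(R_B + D))·(1/coth β). Then ε_A·R_A > 0 and ε_B·R_B > 0. -/

import Mathlib

/-!
Since `(R_A - D) (R_B + D) + D (D - R_A + R_B) = R_A R_B`, the product `J (J + 1)` is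
`R_A (R_A - D) · R_B (R_B + D)` up to a positive square. Hence `-1 < J < 0` says exactly that
`R_A (R_A - D)` and `R_B (R_B + D)` have opposite signs, so that `s` and `-s` are the respective
signs of these two products. Up to positive squares, `ε_A R_A` is `s R_A (R_A - D)` times
`D coth β`, and `ε_B R_B` is `-s R_B (R_B + D)` times `D coth β`; finally `coth β` has the
sign of `β`.
-/

section Field

variable {K : Type*} [Field K] {D RA RB : K}

/-- The diffraction parameter `J` attached to a distance `D` and two radii of curvature `RA`, `RB`.
It takes the junk value `0` when `D * (D - RA + RB) = 0`. -/
def diffractionParameter (D RA RB : K) : K :=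
  (RA - D) * (RB + D) / (D * (D - RA + RB))

theorem diffractionParameter_add_one (h : D * (D - RA + RB) ≠ 0) :
    diffractionParameter D RA RB + 1 = RA * RB / (D * (D - RA + RB)) := by
  rw [diffractionParameter, div_add_one h]
  ring

theorem diffractionParameter_mul_add_one_mul_sq (h : D * (D - RA + RB) ≠ 0) :
    diffractionParameter D RA RB * (diffractionParameter D RA RB + 1) *
      (D * (D - RA + RB)) ^ 2 = RA * (RA - D) * (RB * (RB + D)) := by
  rw [diffractionParameter_add_one h, diffractionParameter, div_mul_div_comm, ← sq,
    div_mul_cancel₀ _ (pow_ne_zero 2 h)]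
  ring

theorem denom_ne_zero_of_diffractionParameter_ne_zero (h : diffractionParameter D RA RB ≠ 0) :
    D * (D - RA + RB) ≠ 0 :=
  (div_ne_zero_iff.mp h).2

end Field

section LinearOrderedField

variable {K : Type*} [Field K] [LinearOrder K] [IsStrictOrderedRing K] {D RA RB s : K}

theorem mul_mul_neg_of_diffractionParameter_mem_Ioo
    (hJ : diffractionParameter D RA RB ∈ Set.Ioo (-1) 0) :
    RA * (RA - D) * (RB * (RB + D)) < 0 := by
  have hden := denom_ne_zero_of_diffractionParameter_ne_zero hJ.2.ne
  have hprod : diffractionParameter D RA RB * (diffractionParameter D RA RB + 1) < 0 :=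
    mul_neg_of_neg_of_pos hJ.2 (neg_lt_iff_pos_add.mp hJ.1)
  rw [← diffractionParameter_mul_add_one_mul_sq hden]
  exact mul_neg_of_neg_of_pos hprod (sq_pos_of_ne_zero hden)

theorem neg_mul_pos_of_mul_pos_of_mul_neg {x y : K} (hx : 0 < s * x) (hxy : x * y < 0) :
    0 < -s * y := by
  have hs : s ≠ 0 := left_ne_zero_of_mul hx.ne'
  have hprod : s * x * (s * y) < 0 := by
    rw [mul_mul_mul_comm]
    exact mul_neg_of_pos_of_neg (mul_self_pos.mpr hs) hxy
  rw [neg_mul, neg_pos]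
  exact Left.neg_of_mul_neg_right hprod hx.le

theorem mul_div_mul_one_div_mul_pos {c d R : K} (hs : 0 < s * (R * d)) (hc : 0 < c * D) :
    0 < s * (D / d) * (1 / c) * R := by
  have hd : d ≠ 0 := right_ne_zero_of_mul (right_ne_zero_of_mul hs.ne')
  have hc₀ : c ≠ 0 := left_ne_zero_of_mul hc.ne'
  have hsquare : s * (D / d) * (1 / c) * R = s * (R * d) * (c * D) / (d * c) ^ 2 := by
    field_simp
  rw [hsquare]
  exact div_pos (mul_pos hs hc) (sq_pos_of_ne_zero (mul_ne_zero hd hc₀))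

theorem stmt15_general {c : K} (hJ : diffractionParameter D RA RB ∈ Set.Ioo (-1) 0)
    (hs : 0 < s * (RA * (RA - D))) (hc : 0 < c * D) :
    0 < s * (D / (RA - D)) * (1 / c) * RA ∧ 0 < -s * (D / (RB + D)) * (1 / c) * RB :=
  have hsB : 0 < -s * (RB * (RB + D)) :=
    neg_mul_pos_of_mul_pos_of_mul_neg hs (mul_mul_neg_of_diffractionParameter_mem_Ioo hJ)
  ⟨mul_div_mul_one_div_mul_pos hs hc, mul_div_mul_one_div_mul_pos hsB hc⟩

end LinearOrderedField

theorem cosh_div_sinh_mul_pos_iff {β x : ℝ} :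
    0 < Real.cosh β / Real.sinh β * x ↔ 0 < β * x := by
  rw [div_mul_eq_mul_div, mul_div_assoc, mul_pos_iff_of_pos_left (Real.cosh_pos β), div_pos_iff,
    Real.sinh_pos_iff, Real.sinh_neg_iff, mul_comm β, mul_pos_iff]

/-- Lemma 5: for `−1 < J < 0`, with `s` the sign of `R_A(R_A − D)`, `coth²β = −1/J` and
`βD > 0`, the parameters `ε_A = s·(D/(R_A − D))·(1/coth β)` and
`ε_B = −s·(D/(R_B + D))·(1/coth β)` satisfy `ε_A·R_A > 0` and `ε_B·R_B > 0`.
Here `coth β = cosh β / sinh β`. -/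
theorem stmt15 (D RA RB : ℝ) (hD : D ≠ 0) (hRA : RA ≠ 0) (hRB : RB ≠ 0)
    (hDA : D ≠ RA) (hDB : D ≠ -RB) (hden : D * (D - RA + RB) ≠ 0)
    (hJ1 : -1 < (RA - D) * (RB + D) / (D * (D - RA + RB)))
    (hJ2 : (RA - D) * (RB + D) / (D * (D - RA + RB)) < 0)
    (s : ℝ) (hs : s = 1 ∨ s = -1) (hsgn : s * (RA * (RA - D)) > 0)
    (β : ℝ) (hβ : β ≠ 0)
    (hcoth : (Real.cosh β / Real.sinh β) ^ 2 =
      -(1 / ((RA - D) * (RB + D) / (D * (D - RA + RB)))))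
    (hβD : β * D > 0)
    (εA εB : ℝ)
    (hεA : εA = s * (D / (RA - D)) * (1 / (Real.cosh β / Real.sinh β)))
    (hεB : εB = -s * (D / (RB + D)) * (1 / (Real.cosh β / Real.sinh β))) :
    εA * RA > 0 ∧ εB * RB > 0 := by
  subst hεA hεB
  exact stmt15_general ⟨hJ1, hJ2⟩ hsgn (cosh_div_sinh_mul_pos_iff.mpr hβD)
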